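/- Let ζ_1, ζ_2, ..., ζ_n be real numbers with ζ_j ≥ 1 for every j. Then Σ_{j=1}^n (1 − ζ_j)/(1 + ζ_j) ≤ (1 − ∏_{j=1}^n ζ_j)/(1 + ∏_{j=1}^n ζ_j). -/

import Mathlib

open Finset

/-- The two-variable case: the difference of the two sides is
`(ab - 1)(a - 1)(b - 1) / ((1 + ab)(1 + a)(1 + b))`. -/
lemma mobius_add_le {a b : ℝ} (ha : 1 ≤ a) (hb : 1 ≤ b) :
    (1 - a) / (1 + a) + (1 - b) / (1 + b) ≤ (1 - a * b) / (1 + a * b) := by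
  have hab : 1 ≤ a * b := one_le_mul_of_one_le_of_one_le ha hb
  have h : (1 - a * b) / (1 + a * b) - ((1 - a) / (1 + a) + (1 - b) / (1 + b)) =
      (a * b - 1) * (a - 1) * (b - 1) / ((1 + a * b) * (1 + a) * (1 + b)) := by
    have h1 : 1 + a ≠ 0 := by positivity
    have h2 : 1 + b ≠ 0 := by positivity
    have h3 : 1 + a * b ≠ 0 := by positivity
    field_simp
    ring
  rw [← sub_nonneg, h]
  have h1 := sub_nonneg.2 ha
  have h2 := sub_nonneg.2 hb
  have h3 := sub_nonneg.2 hab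
  positivity

/-- **Lemma 4.** For real numbers `ζⱼ ≥ 1`,
`∑ (1 - ζⱼ)/(1 + ζⱼ) ≤ (1 - ∏ ζⱼ)/(1 + ∏ ζⱼ)`. -/
theorem stmt9 (n : ℕ) (ζ : Fin n → ℝ) (hζ : ∀ j, 1 ≤ ζ j) :
    ∑ j, (1 - ζ j) / (1 + ζ j) ≤ (1 - ∏ j, ζ j) / (1 + ∏ j, ζ j) := by
  -- Induction on `n`; the product of the remaining factors is again at least `1`.
  induction n with
  | zero => simp
  | succ n ih =>
    rw [Fin.sum_univ_succ, Fin.prod_univ_succ]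
    have hprod : 1 ≤ ∏ j : Fin n, ζ j.succ := by
      have := Finset.prod_le_prod (s := univ) (f := fun _ : Fin n => (1 : ℝ))
        (g := fun j => ζ j.succ) (fun _ _ => zero_le_one) (fun j _ => hζ j.succ)
      simpa using this
    have := ih (fun j => ζ j.succ) (fun j => hζ j.succ)
    linarith [mobius_add_le (hζ 0) hprod]
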